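/- arXiv:1607.03393 — 7 statements merged into one kernel-verified Lean document; each statement's English description precedes it below -/
import Mathlib

section
/- Let R(x,y) = (α_x(y), β_y(x)) be a non-degenerate YBE solution on a set X. Then the map R'(x,y) := (y, α_y(β_{α_x⁻¹(y)}(x))), where α_x⁻¹ denotes the inverse of the bijection α_x, is a bijection of X × X and is a YBE solution on X (the derived solution of R). -/
/-- The map acting as `R` on the first two coordinates of `X × X × X` (i.e. `R × id_X`). -/
def Rfst {X : Type*} (R : X × X → X × X) : X × X × X → X × X × X :=
  fun p => ((R (p.1, p.2.1)).1, (R (p.1, p.2.1)).2, p.2.2)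

/-- The map acting as `R` on the last two coordinates of `X × X × X` (i.e. `id_X × R`). -/
def Rsnd {X : Type*} (R : X × X → X × X) : X × X × X → X × X × X :=
  fun p => (p.1, R p.2)

/-- The braid relation `(R × id) ∘ (id × R) ∘ (R × id) = (id × R) ∘ (R × id) ∘ (id × R)`. -/
def IsBraided {X : Type*} (R : X × X → X × X) : Prop :=
  Rfst R ∘ Rsnd R ∘ Rfst R = Rsnd R ∘ Rfst R ∘ Rsnd R

/-- The map `R(x, y) = (α_x(y), β_y(x))`. -/
def YBEform {X : Type*} (α β : X → X → X) : X × X → X × X :=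
  fun p => (α p.1 p.2, β p.2 p.1)


/-- The derived solution `R'(x,y) = (y, α_y(β_{α_x⁻¹(y)}(x)))`. -/
def derivedMap {X : Type*} (α β αinv : X → X → X) : X × X → X × X :=
  fun p => (p.2, α p.2 (β (αinv p.1 p.2) p.1))

/-!
The map `φ(x, y) = (x, α_x(y))` conjugates `R` into `R'`, so `R'` is bijective because `R` is. For
the braid relation one map of `X × X × X` must intertwine both `R × id` with `R' × id` and `id × R`
with `id × R'`; the guitar map `J(x, y, z) = (x, α_x(y), α_x(α_y(z)))` does. The first holds
because `α_x ∘ α_y` is unchanged when `(x, y)` is replaced by `R(x, y)`, the second because every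
`α_u` is an automorphism of `R'`. The relation then passes from `R` to `R'` because `J` is onto.
-/

open Function

theorem IsBraided.of_semiconj {X Y : Type*} {R : X × X → X × X} {S : Y × Y → Y × Y}
    {J : X × X × X → Y × Y × Y} (hR : IsBraided R) (hJ : Surjective J)
    (hfst : Semiconj J (Rfst R) (Rfst S)) (hsnd : Semiconj J (Rsnd R) (Rsnd S)) :
    IsBraided S := by
  have hleft := hfst.comp_right (hsnd.comp_right hfst)
  have hright := hsnd.comp_right (hfst.comp_right hsnd)
  refine hJ.injective_comp_right ?_
  calc (Rfst S ∘ Rsnd S ∘ Rfst S) ∘ J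
      = J ∘ Rfst R ∘ Rsnd R ∘ Rfst R := hleft.comp_eq.symm
    _ = J ∘ Rsnd R ∘ Rfst R ∘ Rsnd R := congrArg (J ∘ ·) hR
    _ = (Rsnd S ∘ Rfst S ∘ Rsnd S) ∘ J := hright.comp_eq

/-- The shear `(x, y) ↦ (x, α_x(y))` of a family of maps `α_x : Y → Z`. For `X = Y = Z` it is the
map conjugating a solution into its derived solution. -/
def shearMap {X Y Z : Type*} (α : X → Y → Z) : X × Y → X × Z :=
  fun p => (p.1, α p.1 p.2)

theorem shearMap_injective {X Y Z : Type*} {α : X → Y → Z} (hα : ∀ x, Injective (α x)) :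
    Injective (shearMap α) := by
  rintro ⟨x, y⟩ ⟨x', y'⟩ h
  obtain ⟨rfl, h⟩ := Prod.mk.inj h
  exact congrArg (Prod.mk x) (hα x h)

theorem shearMap_surjective {X Y Z : Type*} {α : X → Y → Z} (hα : ∀ x, Surjective (α x)) :
    Surjective (shearMap α) := by
  rintro ⟨x, z⟩
  obtain ⟨y, rfl⟩ := hα x z
  exact ⟨(x, y), rfl⟩

/-- The guitar map `(x, y, z) ↦ (x, α_x(y), α_x(α_y(z)))` on triples, written as the shear of the
last two coordinates followed by the diagonal action of `α_x` on them. It intertwines the braid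
operators of a solution with those of its derived solution. -/
def guitarMap {X : Type*} (α : X → X → X) : X × X × X → X × X × X :=
  shearMap (fun x => Prod.map (α x) (α x)) ∘ Rsnd (shearMap α)

section

variable {X : Type*} {α β αinv : X → X → X}

theorem guitarMap_surjective (hα : ∀ x, Surjective (α x)) : Surjective (guitarMap α) :=
  (shearMap_surjective fun x => (hα x).prodMap (hα x)).comp
    (surjective_id.prodMap (shearMap_surjective hα))

theorem IsBraided.left_comp_left (hYB : IsBraided (YBEform α β)) (x y z : X) :
    α (α x y) (α (β y x) z) = α x (α y z) :=
  congrArg Prod.fst (congrFun hYB (x, y, z))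

theorem IsBraided.right_left_eq_left_right (hYB : IsBraided (YBEform α β)) (x y z : X) :
    β (α (β y x) z) (α x y) = α (β (α y z) x) (β z y) :=
  congrArg (fun p => p.2.1) (congrFun hYB (x, y, z))

theorem semiconj_shearMap_derivedMap (hl : ∀ x, LeftInverse (αinv x) (α x)) :
    Semiconj (shearMap α) (YBEform α β) (derivedMap α β αinv) := by
  rintro ⟨x, t⟩
  simp only [shearMap, YBEform, derivedMap, hl x t]

theorem derivedMap_bijective_iff (hl : ∀ x, LeftInverse (αinv x) (α x))
    (hα : ∀ x, Surjective (α x)) :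
    Bijective (derivedMap α β αinv) ↔ Bijective (YBEform α β) := by
  have hφ : Bijective (shearMap α) :=
    ⟨shearMap_injective fun x => (hl x).injective, shearMap_surjective hα⟩
  rw [← Bijective.of_comp_iff _ hφ, ← (semiconj_shearMap_derivedMap hl).comp_eq,
    Bijective.of_comp_iff' hφ]

theorem IsBraided.semiconj_left_derivedMap (hYB : IsBraided (YBEform α β))
    (hl : ∀ x, LeftInverse (αinv x) (α x)) (hα : ∀ x, Surjective (α x)) (u : X) :
    Semiconj (Prod.map (α u) (α u)) (derivedMap α β αinv) (derivedMap α β αinv) := by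
  rintro ⟨x, y⟩
  obtain ⟨t, rfl⟩ := hα x y
  have hderived : ∀ x t, derivedMap α β αinv (x, α x t) = (α x t, α (α x t) (β t x)) :=
    fun x t => (semiconj_shearMap_derivedMap hl (x, t)).symm
  symm
  calc derivedMap α β αinv (α u x, α u (α x t))
      = derivedMap α β αinv (α u x, α (α u x) (α (β x u) t)) := by
        rw [hYB.left_comp_left]
    _ = (α u (α x t), α (α u (α x t)) (β (α (β x u) t) (α u x))) := by
        rw [hderived, hYB.left_comp_left]
    _ = (α u (α x t), α (α u (α x t)) (α (β (α x t) u) (β t x))) := by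
        rw [hYB.right_left_eq_left_right]
    _ = (α u (α x t), α u (α (α x t) (β t x))) := by
        rw [hYB.left_comp_left]
    _ = Prod.map (α u) (α u) (derivedMap α β αinv (x, α x t)) := by
        rw [hderived, Prod.map_apply]

theorem IsBraided.semiconj_guitarMap_Rfst (hYB : IsBraided (YBEform α β))
    (hl : ∀ x, LeftInverse (αinv x) (α x)) :
    Semiconj (guitarMap α) (Rfst (YBEform α β)) (Rfst (derivedMap α β αinv)) := by
  rintro ⟨x, y, z⟩
  have hpair := semiconj_shearMap_derivedMap (β := β) hl (x, y)
  calc guitarMap α (Rfst (YBEform α β) (x, y, z))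
      = (α x y, α (α x y) (β y x), α (α x y) (α (β y x) z)) := rfl
    _ = (α x y, α (α x y) (β y x), α x (α y z)) := by rw [hYB.left_comp_left]
    _ = Rfst (derivedMap α β αinv) (guitarMap α (x, y, z)) :=
        congrArg (fun p => (p.1, p.2, α x (α y z))) hpair

theorem IsBraided.semiconj_guitarMap_Rsnd (hYB : IsBraided (YBEform α β))
    (hl : ∀ x, LeftInverse (αinv x) (α x)) (hα : ∀ x, Surjective (α x)) :
    Semiconj (guitarMap α) (Rsnd (YBEform α β)) (Rsnd (derivedMap α β αinv)) := by
  have hshear : Semiconj (Rsnd (shearMap α)) (Rsnd (YBEform α β)) (Rsnd (derivedMap α β αinv)) :=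
    fun p => congrArg (Prod.mk p.1) (semiconj_shearMap_derivedMap hl p.2)
  have hdiag : Semiconj (shearMap fun x => Prod.map (α x) (α x))
      (Rsnd (derivedMap α β αinv)) (Rsnd (derivedMap α β αinv)) :=
    fun p => congrArg (Prod.mk p.1) (hYB.semiconj_left_derivedMap hl hα p.1 p.2)
  exact hdiag.comp_left hshear

theorem IsBraided.derivedMap (hYB : IsBraided (YBEform α β))
    (hl : ∀ x, LeftInverse (αinv x) (α x)) (hα : ∀ x, Surjective (α x)) :
    IsBraided (derivedMap α β αinv) :=
  hYB.of_semiconj (guitarMap_surjective hα) (hYB.semiconj_guitarMap_Rfst hl)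
    (hYB.semiconj_guitarMap_Rsnd hl hα)

end

theorem stmt4_general {X : Type*} (α β αinv : X → X → X)
    (hbij : Function.Bijective (YBEform α β))
    (hYB : IsBraided (YBEform α β))
    (hinv : ∀ x, Function.LeftInverse (αinv x) (α x) ∧
      Function.RightInverse (αinv x) (α x)) :
    Function.Bijective (derivedMap α β αinv) ∧ IsBraided (derivedMap α β αinv) := by
  have hl : ∀ x, LeftInverse (αinv x) (α x) := fun x => (hinv x).1
  have hα : ∀ x, Surjective (α x) := fun x => (hinv x).2.surjective
  exact ⟨(derivedMap_bijective_iff hl hα).2 hbij, hYB.derivedMap hl hα⟩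

theorem stmt4 {X : Type*} (α β αinv : X → X → X)
    (hbij : Function.Bijective (YBEform α β))
    (hYB : IsBraided (YBEform α β))
    (hα : ∀ x, Function.Bijective (α x)) (hβ : ∀ x, Function.Bijective (β x))
    (hinv : ∀ x, Function.LeftInverse (αinv x) (α x) ∧
      Function.RightInverse (αinv x) (α x)) :
    Function.Bijective (derivedMap α β αinv) ∧ IsBraided (derivedMap α β αinv) :=
  stmt4_general α β αinv hbij hYB hinv
end

section
/- Let R(x,y) = (α_x(y), β_y(x)) be a non-degenerate YBE solution on a set X with structure group G_R. Then there exists a group homomorphism Λ : G_R → Sym(X) with Λ(ι_G x) = α_x for all x ∈ X (i.e. α extends to a left action of G_R on X), and there exists a group homomorphism P : (G_R)^op → Sym(X) with P(op(ι_G x)) = β_x for all x ∈ X (i.e. β extends to a right action of G_R on X). -/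
/-- The defining relators of the structure group of `R(x,y) = (α_x(y), β_y(x))`:
`x * y = α_x(y) * β_y(x)`. -/
def ybRels {X : Type*} (α β : X → X → X) : Set (FreeGroup X) :=
  {r | ∃ x y : X, r = FreeGroup.of x * FreeGroup.of y *
        (FreeGroup.of (α x y) * FreeGroup.of (β y x))⁻¹}

/-- The structure group `G_R` of the solution `R(x,y) = (α_x(y), β_y(x))`. -/
abbrev StructureGroup {X : Type*} (α β : X → X → X) : Type _ :=
  PresentedGroup (ybRels α β)

/-!
The first component of the braid relation says `α_{α_x(y)} ∘ α_{β_y(x)} = α_x ∘ α_y`, so `x ↦ α_x`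
satisfies the relations of `G_R` in `Sym(X)`. The last component says
`β_z ∘ β_y = β_{β_z(y)} ∘ β_{α_y(z)}`, so `x ↦ β_x` satisfies them in `Sym(X)ᵐᵒᵖ`.
-/

section

variable {X : Type*} {α β : X → X → X}

theorem IsBraided.left_left (h : IsBraided (YBEform α β)) (x y z : X) :
    α (α x y) (α (β y x) z) = α x (α y z) :=
  congrArg Prod.fst (congrFun h (x, y, z))

theorem IsBraided.right_right (h : IsBraided (YBEform α β)) (x y z : X) :
    β z (β y x) = β (β z y) (β (α y z) x) :=
  congrArg (fun p => p.2.2) (congrFun h (x, y, z))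

namespace StructureGroup

/-- The universal property of the structure group: a map `f` from `X` to a group such that
`f x * f y = f (α_x(y)) * f (β_y(x))` extends to a homomorphism on `G_R`. -/
def lift {G : Type*} [Group G] (f : X → G)
    (hf : ∀ x y, f x * f y = f (α x y) * f (β y x)) : StructureGroup α β →* G :=
  PresentedGroup.toGroup (f := f) <| by
    rintro r ⟨x, y, rfl⟩
    simpa only [map_mul, map_inv, FreeGroup.lift_apply_of, mul_inv_eq_one] using hf x y

@[simp]
theorem lift_of {G : Type*} [Group G] (f : X → G)
    (hf : ∀ x y, f x * f y = f (α x y) * f (β y x)) (x : X) :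
    lift f hf (PresentedGroup.of x) = f x :=
  PresentedGroup.toGroup.of _

/-- The left action of `G_R` on `X` extending `α`, for a left non-degenerate solution. -/
noncomputable def leftAction (h : IsBraided (YBEform α β)) (hα : ∀ x, Function.Bijective (α x)) :
    StructureGroup α β →* Equiv.Perm X :=
  lift (fun x => Equiv.ofBijective (α x) (hα x)) fun x y =>
    Equiv.ext fun z => (h.left_left x y z).symm

theorem leftAction_of_apply (h : IsBraided (YBEform α β)) (hα : ∀ x, Function.Bijective (α x))
    (x y : X) : leftAction h hα (PresentedGroup.of x) y = α x y := by
  simp [leftAction]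

/-- The right action of `G_R` on `X` extending `β`, for a right non-degenerate solution. It is
encoded as a homomorphism on the opposite group, obtained from a homomorphism to the opposite of
`Equiv.Perm X`. -/
noncomputable def rightAction (h : IsBraided (YBEform α β)) (hβ : ∀ x, Function.Bijective (β x)) :
    (StructureGroup α β)ᵐᵒᵖ →* Equiv.Perm X :=
  (MulEquiv.opOp (Equiv.Perm X)).symm.toMonoidHom.comp <| MonoidHom.op <|
    lift (fun x => MulOpposite.op (Equiv.ofBijective (β x) (hβ x))) fun x y =>
      congrArg MulOpposite.op (Equiv.ext fun z => h.right_right z x y)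

theorem rightAction_op_of_apply (h : IsBraided (YBEform α β))
    (hβ : ∀ x, Function.Bijective (β x)) (x y : X) :
    rightAction h hβ (MulOpposite.op (PresentedGroup.of x)) y = β x y := by
  simp [rightAction]

end StructureGroup

end

theorem stmt5_general {X : Type*} (α β : X → X → X) (hYB : IsBraided (YBEform α β)) :
    ((∀ x, Function.Bijective (α x)) →
      ∃ Λ : StructureGroup α β →* Equiv.Perm X,
        ∀ x y : X, Λ (PresentedGroup.of x) y = α x y) ∧
    ((∀ x, Function.Bijective (β x)) →
      ∃ P : (StructureGroup α β)ᵐᵒᵖ →* Equiv.Perm X,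
        ∀ x y : X, P (MulOpposite.op (PresentedGroup.of x)) y = β x y) :=
  ⟨fun hα => ⟨StructureGroup.leftAction hYB hα, StructureGroup.leftAction_of_apply hYB hα⟩,
    fun hβ => ⟨StructureGroup.rightAction hYB hβ, StructureGroup.rightAction_op_of_apply hYB hβ⟩⟩

theorem stmt5 {X : Type*} (α β : X → X → X)
    (hbij : Function.Bijective (YBEform α β))
    (hYB : IsBraided (YBEform α β))
    (hα : ∀ x, Function.Bijective (α x)) (hβ : ∀ x, Function.Bijective (β x)) :
    (∃ Λ : StructureGroup α β →* Equiv.Perm X,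
        ∀ x y : X, Λ (PresentedGroup.of x) y = α x y) ∧
    (∃ P : (StructureGroup α β)ᵐᵒᵖ →* Equiv.Perm X,
        ∀ x y : X, P (MulOpposite.op (PresentedGroup.of x)) y = β x y) :=
  (stmt5_general α β hYB).imp (· hα) (· hβ)
end

section
/- Let R(x,y) = (α_x(y), β_y(x)) be a non-degenerate YBE solution on a set X and set φ_R(x,y) := α_y(β_{α_x⁻¹(y)}(x)), where α_x⁻¹ denotes the inverse of the bijection α_x. Let Λ : G_R → Sym(X) be a group homomorphism with Λ(ι_G x) = α_x for all x ∈ X. Then φ_R(Λ(g)(x), Λ(g)(y)) = Λ(g)(φ_R(x,y)) for all g ∈ G_R and all x, y ∈ X. -/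
/-!
Applying `φ_R` to `(x, α_x(z))` removes the inverse: `φ_R(x, α_x(z)) = α_{α_x(z)}(β_z(x))`. In this
form, the first two coordinates of the braid relation say that each `α_a` is an automorphism of
`(X, φ_R)`. Automorphisms form a group and the `ι_G x` generate `G_R`, so every `Λ(g)` is one.
-/

namespace IsBraided

variable {X : Type*} {α β : X → X → X}

theorem left_apply_left (h : IsBraided (YBEform α β)) (x y z : X) :
    α (α x y) (α (β y x) z) = α x (α y z) :=
  congrArg Prod.fst (congrFun h (x, y, z))

theorem right_apply_left (h : IsBraided (YBEform α β)) (x y z : X) :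
    β (α (β y x) z) (α x y) = α (β (α y z) x) (β z y) :=
  congrArg (fun p : X × X × X ↦ p.2.1) (congrFun h (x, y, z))

end IsBraided

/-- The automorphism group of the magma `(X, op)`, as a group of permutations of `X`. Unlike for
`MulAut`, the operation is an explicit argument rather than a `Mul` instance. -/
def opAut {X : Type*} (op : X → X → X) : Subgroup (Equiv.Perm X) where
  carrier := {σ | Function.Semiconj₂ σ op op}
  one_mem' := Function.Semiconj₂.id_left op
  mul_mem' hσ hτ := hσ.comp hτ
  inv_mem' {σ} hσ x y := by
    rw [Equiv.Perm.inv_def, Equiv.symm_apply_eq, hσ, Equiv.apply_symm_apply, Equiv.apply_symm_apply]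

/-- The operation `φ_R(x, y) = α_y(β_{α_x⁻¹(y)}(x))` derived from `R(x, y) = (α_x(y), β_y(x))`.
Left non-degeneracy of `R` is encoded by letting `α` take values in the permutations of `X`. -/
def derivedOp {X : Type*} (α : X → Equiv.Perm X) (β : X → X → X) (x y : X) : X :=
  α y (β ((α x).symm y) x)

section LeftNondegenerate

variable {X : Type*} {α : X → Equiv.Perm X} {β : X → X → X}

theorem derivedOp_apply_right (x z : X) :
    derivedOp α β x (α x z) = α (α x z) (β z x) := by
  rw [derivedOp, Equiv.symm_apply_apply]

theorem IsBraided.mem_opAut_derivedOp (h : IsBraided (YBEform (fun x ↦ α x) β)) (a : X) :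
    α a ∈ opAut (derivedOp α β) := by
  intro x y
  obtain ⟨z, rfl⟩ := (α x).surjective y
  calc α a (derivedOp α β x (α x z))
      = α a (α (α x z) (β z x)) := by rw [derivedOp_apply_right]
    _ = α (α a (α x z)) (α (β (α x z) a) (β z x)) := (h.left_apply_left _ _ _).symm
    _ = α (α (α a x) (α (β x a) z)) (β (α (β x a) z) (α a x)) := by
      rw [h.right_apply_left, h.left_apply_left a x z]
    _ = derivedOp α β (α a x) (α (α a x) (α (β x a) z)) := (derivedOp_apply_right _ _).symm
    _ = derivedOp α β (α a x) (α a (α x z)) := by rw [h.left_apply_left]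

theorem stmt6_general {G : Type*} [Group G] {ι : X → G}
    (hι : Subgroup.closure (Set.range ι) = ⊤) (h : IsBraided (YBEform (fun x ↦ α x) β))
    (Λ : G →* Equiv.Perm X) (hΛ : ∀ x, Λ (ι x) = α x) (g : G) (x y : X) :
    derivedOp α β (Λ g x) (Λ g y) = Λ g (derivedOp α β x y) := by
  have generators_mem : Set.range ι ⊆ (opAut (derivedOp α β)).comap Λ := by
    rintro _ ⟨a, rfl⟩
    rw [SetLike.mem_coe, Subgroup.mem_comap, hΛ]
    exact h.mem_opAut_derivedOp a
  have g_mem : g ∈ (opAut (derivedOp α β)).comap Λ :=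
    (Subgroup.closure_le _).2 generators_mem (hι ▸ Subgroup.mem_top g)
  exact (g_mem x y).symm

end LeftNondegenerate

theorem stmt6 {X : Type*} (α β αinv : X → X → X)
    (hbij : Function.Bijective (YBEform α β))
    (hYB : IsBraided (YBEform α β))
    (hα : ∀ x, Function.Bijective (α x)) (hβ : ∀ x, Function.Bijective (β x))
    (hinv : ∀ x, Function.LeftInverse (αinv x) (α x) ∧
      Function.RightInverse (αinv x) (α x))
    (Λ : StructureGroup α β →* Equiv.Perm X)
    (hΛ : ∀ x y : X, Λ (PresentedGroup.of x) y = α x y) :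
    ∀ (g : StructureGroup α β) (x y : X),
      α (Λ g y) (β (αinv (Λ g x) (Λ g y)) (Λ g x)) =
        Λ g (α y (β (αinv x y) x)) := by
  exact stmt6_general (α := fun x ↦ ⟨α x, αinv x, (hinv x).1, (hinv x).2⟩)
    (PresentedGroup.closure_range_of _) hYB Λ fun x ↦ Equiv.ext (hΛ x)
end

section
/- Let G, A, H be groups, θ : H → A a group homomorphism, π : G → Aut(A) a group homomorphism, b : G → A a bijective 1-cocycle with respect to π, and σ : G → Aut(H) a group homomorphism such that θ(σ(g)(h)) = π(g)(θ(h)) for all g ∈ G and h ∈ H. Define a new operation on H by x · y := x σ(b⁻¹(θ(x)))(y). Then (H, ·) is a group whose identity element is the identity of H, and the map κ : H → G defined by κ(h) := b⁻¹(θ(h)) satisfies κ(x · y) = κ(x)κ(y) for all x, y ∈ H (so κ is a group homomorphism from (H, ·) to G); moreover θ(x · y) = θ(x)·π(κ(x))(θ(y)) for all x, y ∈ H. -/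
/-- The lifted multiplication `x · y = x * σ_{b⁻¹(θ(x))}(y)` on `H`. -/
def liftMul {G A H : Type*} [Group G] [Group A] [Group H]
    (θ : H →* A) (σ : G →* MulAut H) (binv : A → G) (x y : H) : H :=
  x * σ (binv (θ x)) y

/-!
Put `κ = b⁻¹ ∘ θ`. Equivariance of `θ` and the cocycle identity give
`θ (x · y) = θ x * π (κ x) (θ y) = b (κ x) * π (κ x) (b (κ y)) = b (κ x * κ y)`, and cancelling `b`
shows `κ (x · y) = κ x * κ y`: the map `κ` is a relative Rota–Baxter operator. This identity alone
makes `x · y = x * σ (κ x) y` a group law, since it says exactly that `x ↦ (x, κ x)` turns `·` into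
the multiplication of the semidirect product of `H` by `G`.
-/

section RelativeRotaBaxter

variable {G H : Type*}

/-- The descendent product of a map `κ : H → G`, for `G` acting on `H` through `σ`: it
generalizes `liftMul` from `binv ∘ θ` to arbitrary maps `κ`. -/
def descendentMul [Monoid G] [Mul H] (σ : G →* MulAut H) (κ : H → G) (x y : H) : H :=
  x * σ (κ x) y

theorem liftMul_eq_descendentMul {A : Type*} [Group G] [Group A] [Group H]
    (θ : H →* A) (σ : G →* MulAut H) (binv : A → G) :
    liftMul θ σ binv = descendentMul σ (binv ∘ θ) :=
  rfl

/-- Relative Rota–Baxter operators (of weight `1`) with respect to an action `σ` of `G` on `H`: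
maps `κ : H → G` that carry their own descendent product to the product of `G`. -/
def IsRelativeRotaBaxter [Monoid G] [Mul H] (σ : G →* MulAut H) (κ : H → G) : Prop :=
  ∀ x y : H, κ (descendentMul σ κ x y) = κ x * κ y

namespace IsRelativeRotaBaxter

theorem descendentMul_assoc [Monoid G] [Semigroup H] {σ : G →* MulAut H} {κ : H → G}
    (hκ : IsRelativeRotaBaxter σ κ) (x y z : H) :
    descendentMul σ κ (descendentMul σ κ x y) z =
      descendentMul σ κ x (descendentMul σ κ y z) :=
  calc
    descendentMul σ κ x y * σ (κ (descendentMul σ κ x y)) z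
        = x * σ (κ x) y * σ (κ x) (σ (κ y) z) := by
      rw [hκ, map_mul, MulAut.mul_apply, descendentMul]
    _ = x * σ (κ x) (y * σ (κ y) z) := by rw [map_mul, mul_assoc]

theorem map_one [LeftCancelMonoid G] [MulOneClass H] {σ : G →* MulAut H} {κ : H → G}
    (hκ : IsRelativeRotaBaxter σ κ) : κ 1 = 1 := by
  have one_idem : descendentMul σ κ 1 1 = 1 := by
    rw [descendentMul, one_mul, _root_.map_one]
  have κ_idem : κ 1 * κ 1 = κ 1 := by rw [← hκ, one_idem]
  exact mul_eq_left.mp κ_idem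

theorem one_descendentMul [LeftCancelMonoid G] [MulOneClass H] {σ : G →* MulAut H} {κ : H → G}
    (hκ : IsRelativeRotaBaxter σ κ) (x : H) : descendentMul σ κ 1 x = x := by
  rw [descendentMul, hκ.map_one, _root_.map_one, MulAut.one_apply, one_mul]

end IsRelativeRotaBaxter

theorem descendentMul_one [Monoid G] [MulOneClass H] (σ : G →* MulAut H) (κ : H → G) (x : H) :
    descendentMul σ κ x 1 = x := by
  rw [descendentMul, map_one, mul_one]

/-- The inverse of `x` for the descendent product, found by solving `x * σ (κ x) y = 1`
for `y`. -/
def descendentInv [Monoid G] [Group H] (σ : G →* MulAut H) (κ : H → G) (x : H) : H :=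
  (σ (κ x))⁻¹ x⁻¹

theorem descendentMul_inv_cancel [Monoid G] [Group H] (σ : G →* MulAut H) (κ : H → G) (x : H) :
    descendentMul σ κ x (descendentInv σ κ x) = 1 := by
  rw [descendentMul, descendentInv, MulAut.apply_inv_self, mul_inv_cancel]

namespace IsRelativeRotaBaxter

theorem descendentInv_mul_cancel [LeftCancelMonoid G] [Group H] {σ : G →* MulAut H} {κ : H → G}
    (hκ : IsRelativeRotaBaxter σ κ) (x : H) :
    descendentMul σ κ (descendentInv σ κ x) x = 1 := by
  have κ_mul : κ x * κ (descendentInv σ κ x) = 1 := by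
    rw [← hκ, descendentMul_inv_cancel, hκ.map_one]
  have σ_inv : σ (κ (descendentInv σ κ x)) = (σ (κ x))⁻¹ :=
    eq_inv_of_mul_eq_one_right (by rw [← map_mul, κ_mul, _root_.map_one])
  rw [descendentMul, σ_inv, descendentInv, ← map_mul, inv_mul_cancel, _root_.map_one]

end IsRelativeRotaBaxter

end RelativeRotaBaxter

section Cocycle

variable {G A H : Type*} [Monoid G] [MulOneClass A]

/-- The (non-abelian) `1`-cocycles of `G` with values in `A`, for the action `π`. -/
def IsOneCocycle (π : G →* MulAut A) (b : G → A) : Prop :=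
  ∀ g g' : G, b (g * g') = b g * π g (b g')

variable [MulOneClass H] {θ : H →* A} {π : G →* MulAut A} {σ : G →* MulAut H}

theorem map_descendentMul (hθ : ∀ (g : G) (h : H), θ (σ g h) = π g (θ h)) (κ : H → G) (x y : H) :
    θ (descendentMul σ κ x y) = θ x * π (κ x) (θ y) := by
  rw [descendentMul, map_mul, hθ]

theorem IsOneCocycle.isRelativeRotaBaxter {b : G → A} (hb : IsOneCocycle π b)
    (hb_inj : Function.Injective b) (hθ : ∀ (g : G) (h : H), θ (σ g h) = π g (θ h))
    {κ : H → G} (hκ : ∀ x : H, b (κ x) = θ x) : IsRelativeRotaBaxter σ κ := fun x y ↦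
  hb_inj <| calc
    b (κ (descendentMul σ κ x y)) = θ x * π (κ x) (θ y) := by rw [hκ, map_descendentMul hθ]
    _ = b (κ x) * π (κ x) (b (κ y)) := by rw [hκ, hκ]
    _ = b (κ x * κ y) := (hb _ _).symm

end Cocycle

theorem stmt10_general {G A H : Type*} [Group G] [Group A] [Group H]
    (θ : H →* A) (π : G →* MulAut A) (b : G → A) (binv : A → G)
    (σ : G →* MulAut H)
    (hb : IsOneCocycle π b)
    (hbinv : Function.LeftInverse binv b)
    (hrange : ∀ x : H, θ x ∈ Set.range b)
    (hequiv : ∀ (g : G) (h : H), θ (σ g h) = π g (θ h)) :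
    (∀ x y z : H, liftMul θ σ binv (liftMul θ σ binv x y) z =
        liftMul θ σ binv x (liftMul θ σ binv y z)) ∧
    (∀ x : H, liftMul θ σ binv 1 x = x ∧ liftMul θ σ binv x 1 = x) ∧
    (∀ x : H, ∃ y : H, liftMul θ σ binv x y = 1 ∧ liftMul θ σ binv y x = 1) ∧
    (∀ x y : H, binv (θ (liftMul θ σ binv x y)) = binv (θ x) * binv (θ y)) ∧
    (∀ x y : H, θ (liftMul θ σ binv x y) = θ x * π (binv (θ x)) (θ y)) := by
  have b_binv (x : H) : b (binv (θ x)) = θ x := by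
    obtain ⟨g, hg⟩ := hrange x
    rw [← hg, hbinv g]
  have hκ : IsRelativeRotaBaxter σ (binv ∘ θ) :=
    hb.isRelativeRotaBaxter hbinv.injective hequiv b_binv
  rw [liftMul_eq_descendentMul]
  exact ⟨hκ.descendentMul_assoc,
    fun x ↦ ⟨hκ.one_descendentMul x, descendentMul_one σ _ x⟩,
    fun x ↦ ⟨descendentInv σ _ x, descendentMul_inv_cancel σ _ x,
      hκ.descendentInv_mul_cancel x⟩,
    hκ,
    map_descendentMul hequiv (binv ∘ θ)⟩

theorem stmt10 {G A H : Type*} [Group G] [Group A] [Group H]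
    (θ : H →* A) (π : G →* MulAut A) (b : G → A) (binv : A → G)
    (σ : G →* MulAut H)
    (hb : ∀ g g' : G, b (g * g') = b g * π g (b g'))
    (hbinv₁ : Function.LeftInverse binv b)
    (hbinv₂ : Function.RightInverse binv b)
    (hequiv : ∀ (g : G) (h : H), θ (σ g h) = π g (θ h)) :
    (∀ x y z : H, liftMul θ σ binv (liftMul θ σ binv x y) z =
        liftMul θ σ binv x (liftMul θ σ binv y z)) ∧
    (∀ x : H, liftMul θ σ binv 1 x = x ∧ liftMul θ σ binv x 1 = x) ∧
    (∀ x : H, ∃ y : H, liftMul θ σ binv x y = 1 ∧ liftMul θ σ binv y x = 1) ∧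
    (∀ x y : H, binv (θ (liftMul θ σ binv x y)) = binv (θ x) * binv (θ y)) ∧
    (∀ x y : H, θ (liftMul θ σ binv x y) = θ x * π (binv (θ x)) (θ y)) :=
  stmt10_general θ π b binv σ hb hbinv₁ (fun x ↦ hbinv₂.surjective (θ x)) hequiv
end

section
/- Let R_X and R_Y be non-degenerate YBE solutions on sets X and Y, and let h : X → Y be a YB-homomorphism from R_X to R_Y. Then there exist group homomorphisms h_G : G_X → G_Y and h_A : A_X → A_Y with h_G(ι_G x) = ι_G(h(x)) and h_A(ι_A x) = ι_A(h(x)) for all x ∈ X. Moreover, if (Θ^X, b^X) and (Θ^Y, b^Y) are the affine actions associated to R_X and R_Y, then h_A(Θ^X(g)(a)) = Θ^Y(h_G(g))(h_A(a)) and h_A(b^X(g)) = b^Y(h_G(g)) for all g ∈ G_X and a ∈ A_X; that is, h_A is G_X-equivariant relative to (ρ^X, ρ^Y ∘ h_G). -/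
/-- The defining relators of the derived structure group of `R`:
`x * y = y * φ_R(x,y)` with `φ_R(x,y) = α_y(β_{α_x⁻¹(y)}(x))`. -/
def derivedRels {X : Type*} (α β αinv : X → X → X) : Set (FreeGroup X) :=
  {r | ∃ x y : X, r = FreeGroup.of x * FreeGroup.of y *
        (FreeGroup.of y * FreeGroup.of (α y (β (αinv x y) x)))⁻¹}

/-- The derived structure group `A_R` of the solution `R`. -/
abbrev DerivedGroup {X : Type*} (α β αinv : X → X → X) : Type _ :=
  PresentedGroup (derivedRels α β αinv)

/-!
A YB-homomorphism intertwines `α`, `β` and the inverses of `α`, so it carries defining relators to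
defining relators; this gives both group homomorphisms. Equivariance and compatibility with the
cocycles then only need to be checked on generators: two automorphisms intertwined on generators
are intertwined everywhere, the elements of `G` whose action is intertwined form a subgroup, and a
crossed homomorphism `b`, being the same thing as the homomorphism `g ↦ (b g, g)` into the
semidirect product, is determined by its values on generators.
-/

section GroupActions

variable {G H A B : Type*} [Group G] [Group H] [Group A] [Group B]
  {Θ : G →* MulAut A} {Ψ : H →* MulAut B}

theorem semiconj_of_eqOn_dense {S : Set A} (hS : Subgroup.closure S = ⊤) {k : A →* B}
    {σ : A →* A} {τ : B →* B} (hk : S.EqOn (k ∘ σ) (τ ∘ k)) : Function.Semiconj k σ τ :=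
  DFunLike.congr_fun (MonoidHom.eq_of_eqOn_dense hS hk : k.comp σ = τ.comp k)

theorem semiconj_mulAut_of_dense {S : Set G} (hS : Subgroup.closure S = ⊤)
    {f : G →* H} {k : A → B} (hk : ∀ s ∈ S, Function.Semiconj k (Θ s) (Ψ (f s))) (g : G) :
    Function.Semiconj k (Θ g) (Ψ (f g)) := by
  have hg : g ∈ Subgroup.closure S := hS ▸ Subgroup.mem_top g
  induction hg using Subgroup.closure_induction with
  | mem s hs => exact hk s hs
  | one =>
    simpa only [map_one, MulAut.coe_one] using Function.Semiconj.id_right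
  | mul g₁ g₂ _ _ h₁ h₂ =>
    simpa only [map_mul, MulAut.coe_mul] using h₁.comp_right h₂
  | inv g _ hg =>
    simpa only [map_inv] using
      hg.inverses_right (MulAut.apply_inv_self _ (Θ g)) (MulAut.inv_apply_self _ (Ψ (f g)))

theorem semiconj_mulAut_of_generators {S : Set G} (hS : Subgroup.closure S = ⊤) {T : Set A}
    (hT : Subgroup.closure T = ⊤) {f : G →* H} {k : A →* B}
    (hk : ∀ s ∈ S, ∀ t ∈ T, k (Θ s t) = Ψ (f s) (k t)) (g : G) :
    Function.Semiconj k (Θ g) (Ψ (f g)) :=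
  semiconj_mulAut_of_dense hS (fun s hs ↦
    semiconj_of_eqOn_dense hT (σ := (Θ s).toMonoidHom) (τ := (Ψ (f s)).toMonoidHom)
      (hk s hs)) g

/-- The crossed homomorphisms (1-cocycles) `b : G → A` for an action `Θ` of `G` on a possibly
noncommutative group `A`. -/
def IsCrossedHom (Θ : G →* MulAut A) (b : G → A) : Prop :=
  ∀ g h, b (g * h) = b g * Θ g (b h)

namespace IsCrossedHom

/-- The section `g ↦ (b g, g)` of `A ⋊ G → G` attached to a crossed homomorphism `b`; it turns
statements about crossed homomorphisms into statements about homomorphisms. -/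
def toSemidirectProduct {b : G → A} (hb : IsCrossedHom Θ b) : G →* A ⋊[Θ] G :=
  MonoidHom.mk' (fun g ↦ ⟨b g, g⟩) fun g h ↦ SemidirectProduct.ext (hb g h) rfl

theorem eq_of_eqOn_dense {S : Set G} (hS : Subgroup.closure S = ⊤) {b c : G → A}
    (hb : IsCrossedHom Θ b) (hc : IsCrossedHom Θ c) (hbc : S.EqOn b c) : b = c := by
  have hom_eq : hb.toSemidirectProduct = hc.toSemidirectProduct :=
    MonoidHom.eq_of_eqOn_dense hS fun _ hs ↦ SemidirectProduct.ext (hbc hs) rfl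
  exact funext fun g ↦ congrArg SemidirectProduct.left (DFunLike.congr_fun hom_eq g)

theorem comp_monoidHom {c : H → B} (hc : IsCrossedHom Ψ c) (f : G →* H) :
    IsCrossedHom (Ψ.comp f) (c ∘ f) := fun g h ↦ by
  simp only [Function.comp_apply, map_mul, hc _ _, MonoidHom.comp_apply]

theorem map {b : G → A} (hb : IsCrossedHom Θ b) {Φ : G →* MulAut B} {k : A →* B}
    (hk : ∀ g, Function.Semiconj k (Θ g) (Φ g)) : IsCrossedHom Φ (k ∘ b) := fun g h ↦ by
  simp only [Function.comp_apply, hb g h, map_mul, (hk g).eq]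

theorem map_comp_eq_comp {S : Set G} (hS : Subgroup.closure S = ⊤) {b : G → A} {c : H → B}
    (hb : IsCrossedHom Θ b) (hc : IsCrossedHom Ψ c) {f : G →* H} {k : A →* B}
    (hk : ∀ g, Function.Semiconj k (Θ g) (Ψ (f g))) (hbc : S.EqOn (k ∘ b) (c ∘ f)) :
    k ∘ b = c ∘ f :=
  eq_of_eqOn_dense hS (hb.map hk) (hc.comp_monoidHom f) hbc

end IsCrossedHom

end GroupActions

section Functoriality

variable {X Y : Type*} {αX βX αXinv : X → X → X} {αY βY αYinv : Y → Y → Y} {h : X → Y}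

theorem semiconj_YBEform_iff :
    Function.Semiconj (Prod.map h h) (YBEform αX βX) (YBEform αY βY) ↔
      (∀ x, Function.Semiconj h (αX x) (αY (h x))) ∧
        ∀ y, Function.Semiconj h (βX y) (βY (h y)) :=
  ⟨fun hh ↦ ⟨fun x y ↦ congrArg Prod.fst (hh (x, y)), fun y x ↦ congrArg Prod.snd (hh (x, y))⟩,
    fun ⟨hα, hβ⟩ p ↦ Prod.ext (hα p.1 p.2) (hβ p.2 p.1)⟩

theorem mapsTo_ybRels (hα : ∀ x, Function.Semiconj h (αX x) (αY (h x)))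
    (hβ : ∀ y, Function.Semiconj h (βX y) (βY (h y))) :
    (ybRels αX βX).MapsTo (FreeGroup.map h) (ybRels αY βY) := by
  rintro _ ⟨x, y, rfl⟩
  exact ⟨h x, h y, by simp only [map_mul, map_inv, FreeGroup.map.of, (hα x).eq, (hβ y).eq]⟩

theorem mapsTo_derivedRels (hα : ∀ x, Function.Semiconj h (αX x) (αY (h x)))
    (hβ : ∀ y, Function.Semiconj h (βX y) (βY (h y)))
    (hαinv : ∀ x, Function.Semiconj h (αXinv x) (αYinv (h x))) :
    (derivedRels αX βX αXinv).MapsTo (FreeGroup.map h) (derivedRels αY βY αYinv) := by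
  rintro _ ⟨x, y, rfl⟩
  exact ⟨h x, h y, by
    simp only [map_mul, map_inv, FreeGroup.map.of, (hα y).eq, (hβ _).eq, (hαinv x).eq]⟩

variable (hα : ∀ x, Function.Semiconj h (αX x) (αY (h x)))
  (hβ : ∀ y, Function.Semiconj h (βX y) (βY (h y)))
  (hαinv : ∀ x, Function.Semiconj h (αXinv x) (αYinv (h x)))

/-- The homomorphism `h_G` of structure groups induced by a map `h` intertwining `α` and `β`. -/
def StructureGroup.map : StructureGroup αX βX →* StructureGroup αY βY :=
  PresentedGroup.map (FreeGroup.map h) (mapsTo_ybRels hα hβ)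

theorem StructureGroup.map_of (x : X) :
    StructureGroup.map hα hβ (PresentedGroup.of x) = PresentedGroup.of (h x) :=
  rfl

/-- The homomorphism `h_A` of derived structure groups induced by a map `h` intertwining `α`, `β`
and the inverses of `α`. -/
def DerivedGroup.map : DerivedGroup αX βX αXinv →* DerivedGroup αY βY αYinv :=
  PresentedGroup.map (FreeGroup.map h) (mapsTo_derivedRels hα hβ hαinv)

theorem DerivedGroup.map_of (x : X) :
    DerivedGroup.map hα hβ hαinv (PresentedGroup.of x) = PresentedGroup.of (h x) :=
  rfl

variable {ΘX : StructureGroup αX βX →* MulAut (DerivedGroup αX βX αXinv)}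
  {ΘY : StructureGroup αY βY →* MulAut (DerivedGroup αY βY αYinv)}

theorem DerivedGroup.map_semiconj_action
    (hΘX : ∀ x y : X, ΘX (PresentedGroup.of x) (PresentedGroup.of y) =
      PresentedGroup.of (αX x y))
    (hΘY : ∀ x y : Y, ΘY (PresentedGroup.of x) (PresentedGroup.of y) =
      PresentedGroup.of (αY x y))
    (g : StructureGroup αX βX) :
    Function.Semiconj (DerivedGroup.map hα hβ hαinv) (ΘX g)
      (ΘY (StructureGroup.map hα hβ g)) := by
  refine semiconj_mulAut_of_generators (PresentedGroup.closure_range_of _)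
    (PresentedGroup.closure_range_of _) ?_ g
  rintro _ ⟨x, rfl⟩ _ ⟨y, rfl⟩
  rw [hΘX, DerivedGroup.map_of, DerivedGroup.map_of, StructureGroup.map_of, hΘY, (hα x).eq]

theorem DerivedGroup.map_comp_cocycle
    {bX : StructureGroup αX βX → DerivedGroup αX βX αXinv}
    (hbX_of : ∀ x : X, bX (PresentedGroup.of x) = PresentedGroup.of x)
    (hbX : IsCrossedHom ΘX bX)
    {bY : StructureGroup αY βY → DerivedGroup αY βY αYinv}
    (hbY_of : ∀ y : Y, bY (PresentedGroup.of y) = PresentedGroup.of y)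
    (hbY : IsCrossedHom ΘY bY)
    (hΘ : ∀ g, Function.Semiconj (DerivedGroup.map hα hβ hαinv) (ΘX g)
      (ΘY (StructureGroup.map hα hβ g))) :
    DerivedGroup.map hα hβ hαinv ∘ bX = bY ∘ StructureGroup.map hα hβ := by
  refine hbX.map_comp_eq_comp (PresentedGroup.closure_range_of _) hbY hΘ ?_
  rintro _ ⟨x, rfl⟩
  simp only [Function.comp_apply, hbX_of, hbY_of, StructureGroup.map_of, DerivedGroup.map_of]

end Functoriality

theorem stmt13_general {X Y : Type*}
    {αX βX αXinv : X → X → X} {αY βY αYinv : Y → Y → Y}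
    (hinvX : ∀ x, Function.RightInverse (αXinv x) (αX x))
    (hinvY : ∀ y, Function.LeftInverse (αYinv y) (αY y))
    {ΘX : StructureGroup αX βX →* MulAut (DerivedGroup αX βX αXinv)}
    (hΘX : ∀ x y : X, ΘX (PresentedGroup.of x) (PresentedGroup.of y) =
      PresentedGroup.of (αX x y))
    {bX : StructureGroup αX βX → DerivedGroup αX βX αXinv}
    (hbX_of : ∀ x : X, bX (PresentedGroup.of x) = PresentedGroup.of x)
    (hbX : IsCrossedHom ΘX bX)
    {ΘY : StructureGroup αY βY →* MulAut (DerivedGroup αY βY αYinv)}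
    (hΘY : ∀ x y : Y, ΘY (PresentedGroup.of x) (PresentedGroup.of y) =
      PresentedGroup.of (αY x y))
    {bY : StructureGroup αY βY → DerivedGroup αY βY αYinv}
    (hbY_of : ∀ y : Y, bY (PresentedGroup.of y) = PresentedGroup.of y)
    (hbY : IsCrossedHom ΘY bY)
    {h : X → Y}
    (hYBhom : Function.Semiconj (Prod.map h h) (YBEform αX βX) (YBEform αY βY)) :
    ∃ (hG : StructureGroup αX βX →* StructureGroup αY βY)
      (hA : DerivedGroup αX βX αXinv →* DerivedGroup αY βY αYinv),
      (∀ x : X, hG (PresentedGroup.of x) = PresentedGroup.of (h x)) ∧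
      (∀ x : X, hA (PresentedGroup.of x) = PresentedGroup.of (h x)) ∧
      (∀ (g : StructureGroup αX βX) (a : DerivedGroup αX βX αXinv),
        hA (ΘX g a) = ΘY (hG g) (hA a)) ∧
      (∀ g : StructureGroup αX βX, hA (bX g) = bY (hG g)) := by
  obtain ⟨hα, hβ⟩ := semiconj_YBEform_iff.1 hYBhom
  have hαinv : ∀ x, Function.Semiconj h (αXinv x) (αYinv (h x)) := fun x ↦
    (hα x).inverses_right (hinvX x) (hinvY (h x))
  have hΘ := DerivedGroup.map_semiconj_action hα hβ hαinv hΘX hΘY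
  have hb := DerivedGroup.map_comp_cocycle hα hβ hαinv hbX_of hbX hbY_of hbY hΘ
  exact ⟨StructureGroup.map hα hβ, DerivedGroup.map hα hβ hαinv, StructureGroup.map_of hα hβ,
    DerivedGroup.map_of hα hβ hαinv, hΘ, congrFun hb⟩

theorem stmt13 {X Y : Type*}
    (αX βX αXinv : X → X → X) (αY βY αYinv : Y → Y → Y)
    (hbijX : Function.Bijective (YBEform αX βX))
    (hYBX : IsBraided (YBEform αX βX))
    (hαX : ∀ x, Function.Bijective (αX x)) (hβX : ∀ x, Function.Bijective (βX x))
    (hinvX : ∀ x, Function.LeftInverse (αXinv x) (αX x) ∧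
      Function.RightInverse (αXinv x) (αX x))
    (hbijY : Function.Bijective (YBEform αY βY))
    (hYBY : IsBraided (YBEform αY βY))
    (hαY : ∀ y, Function.Bijective (αY y)) (hβY : ∀ y, Function.Bijective (βY y))
    (hinvY : ∀ y, Function.LeftInverse (αYinv y) (αY y) ∧
      Function.RightInverse (αYinv y) (αY y))
    (ΘX : StructureGroup αX βX →* MulAut (DerivedGroup αX βX αXinv))
    (hΘX : ∀ x y : X, ΘX (PresentedGroup.of x) (PresentedGroup.of y) =
      PresentedGroup.of (αX x y))
    (bX : StructureGroup αX βX → DerivedGroup αX βX αXinv)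
    (hbX1 : ∀ x : X, bX (PresentedGroup.of x) = PresentedGroup.of x)
    (hbX2 : ∀ g h, bX (g * h) = bX g * ΘX g (bX h))
    (hbX3 : Function.Bijective bX)
    (ΘY : StructureGroup αY βY →* MulAut (DerivedGroup αY βY αYinv))
    (hΘY : ∀ x y : Y, ΘY (PresentedGroup.of x) (PresentedGroup.of y) =
      PresentedGroup.of (αY x y))
    (bY : StructureGroup αY βY → DerivedGroup αY βY αYinv)
    (hbY1 : ∀ y : Y, bY (PresentedGroup.of y) = PresentedGroup.of y)
    (hbY2 : ∀ g h, bY (g * h) = bY g * ΘY g (bY h))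
    (hbY3 : Function.Bijective bY)
    (h : X → Y)
    (hYBhom : YBEform αY βY ∘ Prod.map h h = Prod.map h h ∘ YBEform αX βX) :
    ∃ (hG : StructureGroup αX βX →* StructureGroup αY βY)
      (hA : DerivedGroup αX βX αXinv →* DerivedGroup αY βY αYinv),
      (∀ x : X, hG (PresentedGroup.of x) = PresentedGroup.of (h x)) ∧
      (∀ x : X, hA (PresentedGroup.of x) = PresentedGroup.of (h x)) ∧
      (∀ (g : StructureGroup αX βX) (a : DerivedGroup αX βX αXinv),
        hA (ΘX g a) = ΘY (hG g) (hA a)) ∧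
      (∀ g : StructureGroup αX βX, hA (bX g) = bY (hG g)) := by
  exact stmt13_general (fun x ↦ (hinvX x).2) (fun y ↦ (hinvY y).1) hΘX hbX1 hbX2 hΘY hbY1 hbY2
    (Function.semiconj_iff_comp_eq.2 hYBhom.symm)
end

section
/- Let R(x,y) = (α_x(y), β_y(x)) be a symmetric YBE solution on a set X, and define x·y := β_x⁻¹(y). Then R(β_y⁻¹(x), y) = (β_x⁻¹(y), x) for all x, y ∈ X; consequently the structure group G_R is isomorphic, by a group isomorphism sending each generator x ∈ X to ι_G x, to the presented group with generating set X and relations (y·x)·y = (x·y)·x for all x, y ∈ X. -/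
/-- The relators `(y·x)·y = (x·y)·x` associated to the binary operation `x·y = c x y`. -/
def cycleRels {X : Type*} (c : X → X → X) : Set (FreeGroup X) :=
  {r | ∃ x y : X, r = FreeGroup.of (c y x) * FreeGroup.of y *
        (FreeGroup.of (c x y) * FreeGroup.of x)⁻¹}

/-!
Read in the second coordinate, `R ∘ R = id` says `β_{β_y(x)}(α_x(y)) = y`, that is,
`α_x(y) = β_y(x)·y`. So `α` is determined by `β`, and the substitution `x ↦ β_y⁻¹(x) = y·x` turns
the relation `x y = α_x(y) β_y(x)` into `(y·x) y = (x·y) x`. Since `(x, y) ↦ (β_y⁻¹(x), y)` is a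
permutation of `X × X`, the two presentations have literally the same set of relators.
-/

/-- The isomorphism, fixing the generators, between the groups presented by two sets of relators
with the same normal closure. -/
def presentedGroupEquivOfNormalClosureEq {X : Type*} {rels₁ rels₂ : Set (FreeGroup X)}
    (h : Subgroup.normalClosure rels₁ = Subgroup.normalClosure rels₂) :
    PresentedGroup rels₁ ≃* PresentedGroup rels₂ :=
  QuotientGroup.quotientMulEquivOfEq h

@[simp]
theorem presentedGroupEquivOfNormalClosureEq_of {X : Type*} {rels₁ rels₂ : Set (FreeGroup X)}
    (h : Subgroup.normalClosure rels₁ = Subgroup.normalClosure rels₂) (x : X) :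
    presentedGroupEquivOfNormalClosureEq h (PresentedGroup.of x) = PresentedGroup.of x :=
  rfl

section

variable {X : Type*} {α β βinv : X → X → X}

namespace YBEform

theorem beta_beta_alpha (hR : Function.Involutive (YBEform α β)) (x y : X) :
    β (β y x) (α x y) = y :=
  congrArg Prod.snd (hR (x, y))

theorem alpha_eq_betaInv (hR : Function.Involutive (YBEform α β))
    (hleft : ∀ x, Function.LeftInverse (βinv x) (β x)) (x y : X) :
    α x y = βinv (β y x) y :=
  calc
    α x y = βinv (β y x) (β (β y x) (α x y)) := (hleft _ _).symm
    _ = βinv (β y x) y := by rw [beta_beta_alpha hR]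

theorem apply_betaInv (hR : Function.Involutive (YBEform α β))
    (hleft : ∀ x, Function.LeftInverse (βinv x) (β x))
    (hright : ∀ x, Function.RightInverse (βinv x) (β x)) (x y : X) :
    YBEform α β (βinv y x, y) = (βinv x y, x) := by
  have hβ : β y (βinv y x) = x := hright y x
  have hα : α (βinv y x) y = βinv x y := by rw [alpha_eq_betaInv hR hleft, hβ]
  exact Prod.ext hα hβ

end YBEform

theorem cycleRels_eq_ybRels (hleft : ∀ x, Function.LeftInverse (βinv x) (β x))
    (hR : ∀ x y : X, YBEform α β (βinv y x, y) = (βinv x y, x)) :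
    cycleRels βinv = ybRels α β := by
  have hα (x y : X) : α (βinv y x) y = βinv x y := congrArg Prod.fst (hR x y)
  have hβ (x y : X) : β y (βinv y x) = x := congrArg Prod.snd (hR x y)
  apply Set.Subset.antisymm
  · rintro _ ⟨x, y, rfl⟩
    exact ⟨βinv y x, y, by rw [hα, hβ]⟩
  · rintro _ ⟨x, y, rfl⟩
    exact ⟨β y x, y, by rw [← hα (β y x) y, hleft]⟩

theorem stmt16_general (hinvol : Function.Involutive (YBEform α β))
    (hleft : ∀ x, Function.LeftInverse (βinv x) (β x))
    (hright : ∀ x, Function.RightInverse (βinv x) (β x)) :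
    (∀ x y : X, YBEform α β (βinv y x, y) = (βinv x y, x)) ∧
    ∃ Φ : PresentedGroup (cycleRels βinv) ≃* StructureGroup α β,
      ∀ x : X, Φ (PresentedGroup.of x) = PresentedGroup.of x := by
  have hR := YBEform.apply_betaInv hinvol hleft hright
  have hrels := congrArg Subgroup.normalClosure (cycleRels_eq_ybRels hleft hR)
  exact ⟨hR, presentedGroupEquivOfNormalClosureEq hrels,
    presentedGroupEquivOfNormalClosureEq_of hrels⟩

end

theorem stmt16 {X : Type*} (α β βinv : X → X → X)
    (hbij : Function.Bijective (YBEform α β))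
    (hYB : IsBraided (YBEform α β))
    (hα : ∀ x, Function.Bijective (α x)) (hβ : ∀ x, Function.Bijective (β x))
    (hinvol : YBEform α β ∘ YBEform α β = id)
    (hβinv : ∀ x, Function.LeftInverse (βinv x) (β x) ∧
      Function.RightInverse (βinv x) (β x)) :
    (∀ x y : X, YBEform α β (βinv y x, y) = (βinv x y, x)) ∧
    ∃ Φ : PresentedGroup (cycleRels βinv) ≃* StructureGroup α β,
      ∀ x : X, Φ (PresentedGroup.of x) = PresentedGroup.of x :=
  stmt16_general (congrFun hinvol) (fun x => (hβinv x).1) (fun x => (hβinv x).2)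
end

section
/- Let X and S be cycle sets, let π be an action of X on S, and write R_X(x,y) = (α_x(y), β_y(x)) and R_S(s,t) = (α̃_s(t), β̃_t(s)) for the associated maps of X and S. Then every left multiplication ℓ_{(x,s)} of the semidirect product X ⋉_π S is bijective, and the associated map of X ⋉_π S satisfies R_{X⋉_πS}((x,s),(y,t)) = ((α_x(y), α̃_s(π_x(t))), (β_y(x), π_{α_x(y)}⁻¹(β̃_{π_x(t)}(s)))) for all x, y ∈ X and s, t ∈ S. -/
/-- The semidirect product operation on `X × S`:
`(x,s)·(y,t) = (x·y, π_{x·y}(s)·π_{y·x}(t))`. -/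
def sdOp {X S : Type*} (cX : X → X → X) (cS : S → S → S) (p : X → S → S) :
    X × S → X × S → X × S :=
  fun q r => (cX q.1 r.1, cS (p (cX q.1 r.1) q.2) (p (cX r.1 q.1) r.2))

/-! Left multiplication by `(y, t)` in `X ⋉ S` is triangular: it acts on the first coordinate by
`ℓ_y`, and on the fibre over `z` by `π_{z·y}` followed by `ℓ_{π_{y·z}(t)}`.
Inverting it over `x = y·z` replaces `π_{y·z}(t)` by `π_x(t)`, which is how `π_x(t)` enters the
formula for `R`. -/

section

open Equiv

variable {X S : Type*}

/-- The associated map `R(x, y) = (ℓ_{ℓ_y⁻¹(x)}(y), ℓ_y⁻¹(x))` of a set with bijective left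
multiplications. The operation is encoded by the family `ℓ` of its left multiplications, so that
left division is available as `(ℓ y).symm`. -/
def associatedMap (ℓ : X → Perm X) (q : X × X) : X × X :=
  (ℓ ((ℓ q.2).symm q.1) q.2, (ℓ q.2).symm q.1)

theorem associatedMap_eq_iff {ℓ : X → Perm X} {x y a b : X} :
    associatedMap ℓ (x, y) = (a, b) ↔ ℓ y b = x ∧ ℓ b y = a := by
  rw [associatedMap, Prod.mk.injEq, and_comm, symm_apply_eq, eq_comm (a := x)]
  refine and_congr_right fun hx ↦ ?_
  rw [← hx, symm_apply_apply]

/-- The left multiplications of the semidirect product of `X` and `S` along `π`, as permutations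
of `X × S`. Here `ℓ` and `m` are the left multiplications of `X` and `S`. -/
def sdLeftMul (ℓ : X → Perm X) (m : S → Perm S) (π : X → Perm S) (q : X × S) : Perm (X × S) :=
  (ℓ q.1).prodShear fun x ↦ (π (ℓ x q.1)).trans (m (π (ℓ q.1 x) q.2))

variable (ℓ : X → Perm X) (m : S → Perm S) (π : X → Perm S)

theorem coe_sdLeftMul (q : X × S) :
    ⇑(sdLeftMul ℓ m π q) = sdOp (fun x ↦ ℓ x) (fun s ↦ m s) (fun x ↦ π x) q :=
  rfl

theorem sdLeftMul_apply (x y : X) (s t : S) :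
    sdLeftMul ℓ m π (x, s) (y, t) = (ℓ x y, m (π (ℓ x y) s) (π (ℓ y x) t)) :=
  rfl

theorem sdLeftMul_symm_apply (x y : X) (s t : S) :
    (sdLeftMul ℓ m π (y, t)).symm (x, s) =
      ((ℓ y).symm x, (π (ℓ ((ℓ y).symm x) y)).symm ((m (π x t)).symm s)) := by
  rw [symm_apply_eq, sdLeftMul_apply]
  simp only [apply_symm_apply]

theorem associatedMap_sdLeftMul (x y : X) (s t : S) :
    associatedMap (sdLeftMul ℓ m π) ((x, s), (y, t)) =
      (((associatedMap ℓ (x, y)).1, (associatedMap m (s, π x t)).1),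
        ((associatedMap ℓ (x, y)).2,
          (π (associatedMap ℓ (x, y)).1).symm (associatedMap m (s, π x t)).2)) := by
  simp only [associatedMap, sdLeftMul_symm_apply, sdLeftMul_apply, apply_symm_apply]

theorem stmt17_general :
    (∀ q : X × S,
      Function.Bijective (sdOp (fun x ↦ ℓ x) (fun s ↦ m s) (fun x ↦ π x) q)) ∧
    (∀ (x y : X) (s t : S),
      sdOp (fun x ↦ ℓ x) (fun s ↦ m s) (fun x ↦ π x) (y, t)
        ((ℓ y).symm x, (π (ℓ ((ℓ y).symm x) y)).symm ((m (π x t)).symm s)) = (x, s) ∧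
      sdOp (fun x ↦ ℓ x) (fun s ↦ m s) (fun x ↦ π x)
        ((ℓ y).symm x, (π (ℓ ((ℓ y).symm x) y)).symm ((m (π x t)).symm s)) (y, t) =
        (ℓ ((ℓ y).symm x) y, m ((m (π x t)).symm s) (π x t))) := by
  simp only [← coe_sdLeftMul]
  exact ⟨fun q ↦ (sdLeftMul ℓ m π q).bijective,
    fun x y s t ↦ associatedMap_eq_iff.1 (associatedMap_sdLeftMul ℓ m π x y s t)⟩

end

theorem stmt17 {X S : Type*} (cX cXinv : X → X → X) (cS cSinv : S → S → S)
    (p pinv : X → S → S)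
    (hXbij : ∀ x, Function.Bijective (cX x))
    (hXinv : ∀ x, Function.LeftInverse (cXinv x) (cX x) ∧
      Function.RightInverse (cXinv x) (cX x))
    (hXcycle : ∀ x y z, cX (cX x y) (cX x z) = cX (cX y x) (cX y z))
    (hSbij : ∀ s, Function.Bijective (cS s))
    (hSinv : ∀ s, Function.LeftInverse (cSinv s) (cS s) ∧
      Function.RightInverse (cSinv s) (cS s))
    (hScycle : ∀ s t u, cS (cS s t) (cS s u) = cS (cS t s) (cS t u))
    (hpbij : ∀ x, Function.Bijective (p x))
    (hpinv : ∀ x, Function.LeftInverse (pinv x) (p x) ∧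
      Function.RightInverse (pinv x) (p x))
    (hpmor : ∀ x s t, p x (cS s t) = cS (p x s) (p x t))
    (hpact : ∀ x y s, p (cX y x) (p y s) = p (cX x y) (p x s)) :
    (∀ q : X × S, Function.Bijective (sdOp cX cS p q)) ∧
    (∀ (x y : X) (s t : S),
      sdOp cX cS p (y, t)
        (cXinv y x, pinv (cX (cXinv y x) y) (cSinv (p x t) s)) = (x, s) ∧
      sdOp cX cS p (cXinv y x, pinv (cX (cXinv y x) y) (cSinv (p x t) s)) (y, t) =
        (cX (cXinv y x) y, cS (cSinv (p x t) s) (p x t))) :=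
  stmt17_general (fun x ↦ ⟨cX x, cXinv x, (hXinv x).1, (hXinv x).2⟩)
    (fun s ↦ ⟨cS s, cSinv s, (hSinv s).1, (hSinv s).2⟩)
    (fun x ↦ ⟨p x, pinv x, (hpinv x).1, (hpinv x).2⟩)
end
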